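/- Let q be a power of a prime p and let k be an even positive integer. Then for every x ∈ F_{q^k}^*, one has Tr_{q^2/q}(x^{(q^k-1)/(q^2-1)}) = 0 if and only if x^{(q^k-1)/(q+1)} = −1. Consequently, if α is a primitive element of F_{q^k}, then the set {x ∈ F_{q^k}^* : Tr_{q^2/q}(x^{(q^k-1)/(q^2-1)}) = 0} equals the subgroup ⟨α^{q+1}⟩ when q is even, and equals the coset α^{(q+1)/2}⟨α^{q+1}⟩ when q is odd. -/

import Mathlib

/-
Write `K ⊆ L ⊆ M` for the three fields and `q` for the order of `K`. As `L / K` is quadratic, the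
trace of `y ∈ L` is `y + y ^ q = y * (1 + y ^ (q - 1))`, so for `y ≠ 0` it vanishes iff
`y ^ (q - 1) = -1`. For `y` the norm of `x ∈ M`, a power of `x` with exponent
`(|M| - 1) / (q ^ 2 - 1)`, this says `x ^ N = -1` with `N = (|M| - 1) / (q + 1)`. The solutions of
this equation form a coset of the group of `N`-th roots of unity, which `α ^ (q + 1)` generates. A
particular solution is `1` in characteristic two, and `α ^ ((q + 1) / 2)` when `q` is odd, because
its `N`-th power is a primitive square root of unity.
-/

section RootsOfUnity

lemma setOf_pow_eq_pow_eq_image_rootsOfUnity {R : Type*} [CommMonoid R] (n : ℕ) (b : Rˣ) :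
    {u : Rˣ | u ^ n = b ^ n} = (b * ·) '' (rootsOfUnity n R : Set Rˣ) := by
  ext u
  simp only [Set.image_mul_left, Set.mem_preimage, Set.mem_ofPred_eq, SetLike.mem_coe,
    mem_rootsOfUnity, mul_pow, inv_pow, inv_mul_eq_one, eq_comm]

variable {R : Type*} [CommRing R] [IsDomain R] {α : Rˣ} {n m : ℕ}

lemma zpowers_pow_eq_rootsOfUnity_div (hα : IsPrimitiveRoot α n) (hn : 0 < n) (hm : m ∣ n) :
    Subgroup.zpowers (α ^ m) = rootsOfUnity (n / m) R := by
  have : NeZero (n / m) := ⟨(Nat.div_pos (Nat.le_of_dvd hn hm) (Nat.pos_of_dvd_of_pos hm hn)).ne'⟩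
  exact (hα.pow hn (Nat.mul_div_cancel' hm).symm).zpowers_eq

lemma pow_half_pow_div_eq_neg_one (hα : IsPrimitiveRoot α n) (hn : 0 < n) (hm : m ∣ n)
    (heven : Even m) : (α ^ (m / 2)) ^ (n / m) = -1 := by
  have hfac : n = m / 2 * (n / m) * 2 := by
    rw [mul_right_comm, Nat.div_mul_cancel heven.two_dvd, Nat.mul_div_cancel' hm]
  have hroot : IsPrimitiveRoot ((α ^ (m / 2)) ^ (n / m)) 2 := by
    rw [← pow_mul]
    exact hα.pow hn hfac
  exact Units.ext (IsPrimitiveRoot.coe_units_iff.2 hroot).eq_neg_one_of_two_right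

end RootsOfUnity

section FiniteField

lemma neg_one_eq_one_of_even_card {F : Type*} [Field F] [Finite F]
    (h : Even (Nat.card F)) : (-1 : F) = 1 := by
  have := Fintype.ofFinite F
  rw [Nat.card_eq_fintype_card] at h
  have : CharP F 2 := ringChar.of_eq (FiniteField.even_card_iff_char_two.2 (Nat.even_iff.1 h))
  exact CharTwo.neg_eq 1

lemma isPrimitiveRoot_card_sub_one_of_forall_mem_zpowers {F : Type*} [Field F] {α : Fˣ}
    (hα : ∀ u, u ∈ Subgroup.zpowers α) : IsPrimitiveRoot α (Nat.card F - 1) := by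
  rw [← Nat.card_units, ← orderOf_eq_card_of_forall_mem_zpowers hα]
  exact IsPrimitiveRoot.orderOf α

lemma card_sub_one_dvd_card_sub_one (K L : Type*) [Field K] [Field L] [Finite L] [Algebra K L] :
    Nat.card K - 1 ∣ Nat.card L - 1 := by
  rw [Module.natCard_eq_pow_finrank (K := K) (V := L)]
  exact Nat.sub_one_dvd_pow_sub_one _ _

lemma add_one_dvd_card_sub_one_of_card_eq_sq {K L : Type*} [Field K] [Field L] [Finite L]
    [Algebra K L] {q : ℕ} (h : Nat.card K = q ^ 2) : q + 1 ∣ Nat.card L - 1 := by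
  have hdvd : q + 1 ∣ Nat.card K - 1 := by
    rw [h, ← one_pow 2, Nat.sq_sub_sq, one_pow]
    exact dvd_mul_right _ _
  exact hdvd.trans (card_sub_one_dvd_card_sub_one K L)

lemma finrank_eq_of_card_eq_pow {K V : Type*} [Field K] [Finite K] [AddCommGroup V] [Module K V]
    [Module.Finite K V] {d : ℕ} (h : Nat.card V = Nat.card K ^ d) : Module.finrank K V = d := by
  rw [Module.natCard_eq_pow_finrank (K := K) (V := V)] at h
  exact Nat.pow_right_injective Finite.one_lt_card h

variable {K L M : Type*} [Field K] [Field L] [Field M] [Algebra K L] [Algebra L M]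

lemma trace_eq_zero_iff_pow_card_sub_one_eq_neg_one [Finite L] (h : Module.finrank K L = 2)
    {y : L} (hy : y ≠ 0) : Algebra.trace K L y = 0 ↔ y ^ (Nat.card K - 1) = -1 := by
  have : Finite K := .of_injective _ (algebraMap K L).injective
  have htrace : algebraMap K L (Algebra.trace K L y) = y * (y ^ (Nat.card K - 1) + 1) := by
    rw [FiniteField.algebraMap_trace_eq_sum_pow, h, Finset.sum_range_succ, Finset.sum_range_one,
      pow_zero, pow_one, pow_one, mul_add, mul_pow_sub_one Nat.card_pos.ne', mul_one, add_comm]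
  rw [← map_eq_zero (algebraMap K L), htrace, mul_eq_zero, or_iff_right hy,
    add_eq_zero_iff_eq_neg]

variable [Finite M]

lemma trace_norm_eq_zero_iff (h : Nat.card L = Nat.card K ^ 2) {x : M} (hx : x ≠ 0) :
    Algebra.trace K L (Algebra.norm L x) = 0 ↔
      x ^ ((Nat.card M - 1) / (Nat.card K + 1)) = -1 := by
  have : Finite L := .of_injective _ (algebraMap L M).injective
  have : Finite K := .of_injective _ (algebraMap K L).injective
  have hexp : (Nat.card M - 1) / (Nat.card L - 1) * (Nat.card K - 1) =
      (Nat.card M - 1) / (Nat.card K + 1) := by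
    have hdvd := card_sub_one_dvd_card_sub_one L M
    rw [h, ← one_pow 2, Nat.sq_sub_sq, one_pow] at hdvd ⊢
    rw [← Nat.div_div_eq_div_mul, Nat.div_mul_cancel (Nat.dvd_div_of_mul_dvd hdvd)]
  rw [trace_eq_zero_iff_pow_card_sub_one_eq_neg_one (finrank_eq_of_card_eq_pow h)
      (Algebra.norm_ne_zero_iff.2 hx),
    ← (algebraMap L M).injective.eq_iff, map_pow, FiniteField.algebraMap_norm_eq_pow, ← pow_mul,
    hexp, map_neg, map_one]

lemma setOf_trace_norm_eq_zero_eq_image_rootsOfUnity (h : Nat.card L = Nat.card K ^ 2) {b : Mˣ}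
    (hb : b ^ ((Nat.card M - 1) / (Nat.card K + 1)) = -1) :
    {x : M | x ≠ 0 ∧ Algebra.trace K L (Algebra.norm L x) = 0} =
      (fun u : Mˣ ↦ ((b * u : Mˣ) : M)) ''
        (rootsOfUnity ((Nat.card M - 1) / (Nat.card K + 1)) M : Set Mˣ) := by
  have hunits : {x : M | x ≠ 0 ∧ Algebra.trace K L (Algebra.norm L x) = 0} =
      Units.val '' {u : Mˣ | u ^ ((Nat.card M - 1) / (Nat.card K + 1)) = -1} := by
    ext x
    constructor
    · rintro ⟨hx, htrace⟩
      exact ⟨Units.mk0 x hx, Units.ext ((trace_norm_eq_zero_iff h hx).1 htrace), rfl⟩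
    · rintro ⟨u, hu, rfl⟩
      exact ⟨u.ne_zero, (trace_norm_eq_zero_iff h u.ne_zero).2 (congrArg Units.val hu)⟩
  rw [hunits, ← hb, setOf_pow_eq_pow_eq_image_rootsOfUnity, Set.image_image]

end FiniteField

/-- Let `q` be a power of a prime `p` and `k` an even positive integer.
For `x ∈ F_{q^k}ˣ` one has `Tr_{q²/q}(x^{(q^k-1)/(q²-1)}) = 0 ↔ x^{(q^k-1)/(q+1)} = -1`.
Consequently, for a primitive element `α` of `F_{q^k}`, the set
`{x ∈ F_{q^k}ˣ : Tr_{q²/q}(x^{(q^k-1)/(q²-1)}) = 0}` is `⟨α^{q+1}⟩` if `q` is even, and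
the coset `α^{(q+1)/2}⟨α^{q+1}⟩` if `q` is odd.
Here `x^{(q^k-1)/(q²-1)}` is the norm from `Fk` to `Ff` (hypothesis `hnorm`). -/
theorem stmt8 (p e q k : ℕ) [Fact p.Prime] (he : 0 < e) (hq : q = p ^ e)
    (hk : 0 < k) (hke : Even k)
    (Fq Ff Fk : Type) [Field Fq] [Field Ff] [Field Fk]
    [Fintype Fq] [Fintype Ff] [Fintype Fk]
    [Algebra Fq Ff] [Algebra Ff Fk]
    (hcq : Fintype.card Fq = q) (hcf : Fintype.card Ff = q ^ 2)
    (hck : Fintype.card Fk = q ^ k)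
    (hnorm : ∀ x : Fk,
      algebraMap Ff Fk (Algebra.norm Ff x) = x ^ ((q ^ k - 1) / (q ^ 2 - 1)))
    (α : Fkˣ) (hα : ∀ g : Fkˣ, g ∈ Subgroup.zpowers α) :
    (∀ x : Fk, x ≠ 0 →
      (Algebra.trace Fq Ff (Algebra.norm Ff x) = 0 ↔ x ^ ((q ^ k - 1) / (q + 1)) = -1)) ∧
    (Even q →
      {x : Fk | x ≠ 0 ∧ Algebra.trace Fq Ff (Algebra.norm Ff x) = 0}
        = (fun u : Fkˣ => (u : Fk)) '' ↑(Subgroup.zpowers (α ^ (q + 1)))) ∧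
    (Odd q →
      {x : Fk | x ≠ 0 ∧ Algebra.trace Fq Ff (Algebra.norm Ff x) = 0}
        = (fun u : Fkˣ => ((α ^ ((q + 1) / 2) * u : Fkˣ) : Fk)) ''
            ↑(Subgroup.zpowers (α ^ (q + 1)))) := by
  simp only [← Nat.card_eq_fintype_card] at hcq hcf hck
  subst hcq
  have hα' : IsPrimitiveRoot α (Nat.card Fk - 1) :=
    isPrimitiveRoot_card_sub_one_of_forall_mem_zpowers hα
  have hpos : 0 < Nat.card Fk - 1 := Nat.sub_pos_of_lt Finite.one_lt_card
  have hdvd : Nat.card Fq + 1 ∣ Nat.card Fk - 1 :=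
    add_one_dvd_card_sub_one_of_card_eq_sq hcf
  rw [← hck, zpowers_pow_eq_rootsOfUnity_div hα' hpos hdvd]
  refine ⟨fun x hx ↦ trace_norm_eq_zero_iff hcf hx, fun heven ↦ ?_, fun hodd ↦ ?_⟩
  · have hone : (-1 : Fk) = 1 :=
      neg_one_eq_one_of_even_card (hck ▸ heven.pow_of_ne_zero hk.ne')
    have hb : (1 : Fkˣ) ^ ((Nat.card Fk - 1) / (Nat.card Fq + 1)) = -1 := by
      rw [one_pow, Units.ext_iff, Units.val_neg, Units.val_one, hone]
    simpa only [one_mul] using setOf_trace_norm_eq_zero_eq_image_rootsOfUnity hcf hb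
  · exact setOf_trace_norm_eq_zero_eq_image_rootsOfUnity hcf
      (pow_half_pow_div_eq_neg_one hα' hpos hdvd hodd.add_one)
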